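/- Let b be a real number. Then the inequality (3/8)x + ((μ − y)/y)·((2xy − bμ(x+y))/(x + y − μ)) ≤ bμ holds for every μ > 0 and every pair (x,y) with 0 < x ≤ μ, 0 < y ≤ μ and x + y > μ, if and only if b ≥ 8/13. -/

import Mathlib

/-!
After clearing denominators, `c * x + φ₀(x, y) ≤ b * μ` says that
`y * (c * (x + y - μ) + 2 * (μ - y)) ≤ b * μ ^ 2`. For `0 ≤ c` the left side is largest at `x = μ`,
where it equals `2 * μ * y - (2 - c) * y ^ 2`; completing the square gives the maximum
`(2 - c)⁻¹ * μ ^ 2`, attained at `y = (2 - c)⁻¹ * μ`, and `c ≤ 1` puts this point inside the domain.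
For `c = 3 / 8` the constant is `8 / 13`.
-/

section Field

variable {K : Type*} [Field K] {b c μ x y : K}

/-- The function `φ₀` with parameters `b` and `μ`, over an arbitrary field. It is meaningful only
for `y ≠ 0` and `x + y ≠ μ`; elsewhere the divisions return `0`. -/
def phi0 (b μ x y : K) : K :=
  ((μ - y) / y) * ((2 * x * y - b * μ * (x + y)) / (x + y - μ))

lemma sub_mul_add_phi0 (hy : y ≠ 0) (hxy : x + y - μ ≠ 0) :
    b * μ - (c * x + phi0 b μ x y) =
      x / (y * (x + y - μ)) * (b * μ ^ 2 - y * (c * (x + y - μ) + 2 * (μ - y))) := by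
  unfold phi0
  field_simp
  ring

lemma mul_mul_add_two_mul_sub_eq (hc : 2 - c ≠ 0) :
    y * (c * y + 2 * (μ - y)) = (2 - c)⁻¹ * μ ^ 2 - (2 - c) * (y - (2 - c)⁻¹ * μ) ^ 2 := by
  field_simp
  ring

end Field

section LinearOrderedField

variable {K : Type*} [Field K] [LinearOrder K] [IsStrictOrderedRing K] {b c μ x y : K}

lemma mul_add_phi0_le_iff (hx : 0 < x) (hy : 0 < y) (hxy : μ < x + y) :
    c * x + phi0 b μ x y ≤ b * μ ↔ y * (c * (x + y - μ) + 2 * (μ - y)) ≤ b * μ ^ 2 := by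
  have hd : 0 < x + y - μ := sub_pos.2 hxy
  rw [← sub_nonneg, sub_mul_add_phi0 hy.ne' hd.ne',
    mul_nonneg_iff_of_pos_left (div_pos hx (mul_pos hy hd)), sub_nonneg]

lemma mul_mul_add_two_mul_sub_le (hc₀ : 0 ≤ c) (hc₂ : c < 2) (hy : 0 ≤ y) (hx : x ≤ μ) :
    y * (c * (x + y - μ) + 2 * (μ - y)) ≤ (2 - c)⁻¹ * μ ^ 2 := by
  have hc : 0 < 2 - c := sub_pos.2 hc₂
  calc
    y * (c * (x + y - μ) + 2 * (μ - y)) ≤ y * (c * y + 2 * (μ - y)) := by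
      gcongr
      linarith
    _ = (2 - c)⁻¹ * μ ^ 2 - (2 - c) * (y - (2 - c)⁻¹ * μ) ^ 2 :=
      mul_mul_add_two_mul_sub_eq hc.ne'
    _ ≤ (2 - c)⁻¹ * μ ^ 2 := sub_le_self _ (by positivity)

theorem phi2_le_iff_general (hc₀ : 0 ≤ c) (hc₁ : c ≤ 1) (hμ : 0 < μ) :
    (∀ x y : K, 0 < x → x ≤ μ → 0 < y → y ≤ μ → μ < x + y →
      c * x + phi0 b μ x y ≤ b * μ) ↔ (2 - c)⁻¹ ≤ b := by
  have hc : 1 ≤ 2 - c := by linarith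
  constructor
  · intro h
    set y := (2 - c)⁻¹ * μ with hy_def
    have hy : 0 < y := by positivity
    have hyμ : y ≤ μ := mul_le_of_le_one_left hμ.le (inv_le_one_of_one_le₀ hc)
    have hμy : μ < μ + y := lt_add_of_pos_right μ hy
    have hmax := (mul_add_phi0_le_iff hμ hy hμy).1 (h μ y hμ le_rfl hy hyμ hμy)
    have hsq : (2 - c)⁻¹ * μ ^ 2 ≤ b * μ ^ 2 := by
      rwa [add_sub_cancel_left, mul_mul_add_two_mul_sub_eq (by positivity), ← hy_def, sub_self,
        zero_pow two_ne_zero, mul_zero, sub_zero] at hmax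
    exact le_of_mul_le_mul_right hsq (pow_pos hμ 2)
  · intro hb x y hx hxμ hy _ hxy
    rw [mul_add_phi0_le_iff hx hy hxy]
    calc
      y * (c * (x + y - μ) + 2 * (μ - y)) ≤ (2 - c)⁻¹ * μ ^ 2 :=
        mul_mul_add_two_mul_sub_le hc₀ (by linarith) hy.le hxμ
      _ ≤ b * μ ^ 2 := by gcongr

end LinearOrderedField

theorem phi2_le_iff (b : ℝ) :
    (∀ μ : ℝ, 0 < μ → ∀ x y : ℝ, 0 < x → x ≤ μ → 0 < y → y ≤ μ → μ < x + y →
      (3 / 8) * x + ((μ - y) / y) * ((2 * x * y - b * μ * (x + y)) / (x + y - μ)) ≤ b * μ) ↔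
    b ≥ 8 / 13 := by
  have h (μ : ℝ) (hμ : 0 < μ) :=
    phi2_le_iff_general (b := b) (c := 3 / 8) (by norm_num) (by norm_num) hμ
  rw [ge_iff_le, show (8 / 13 : ℝ) = (2 - 3 / 8)⁻¹ by norm_num]
  exact ⟨fun hle => (h 1 one_pos).1 (hle 1 one_pos), fun hb μ hμ => (h μ hμ).2 hb⟩
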